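/- Let G be a finite simple graph with at least three vertices that is not isomorphic to the complete graph K_4. Then G is primarily orientable (i.e., G admits a prime orientation) if and only if both of the following hold: (1) G is connected, and (2) for every stable module S of G, 2^(d_G(S)) ≥ |S| (equivalently, d_G(S) ≥ log₂|S|). -/

import Mathlib

variable {V : Type*}

/-- `M` is a module of the simple graph `G`: every vertex outside `M` is adjacent
to every vertex of `M` or to no vertex of `M`. -/
def GraphModule (G : SimpleGraph V) (M : Set V) : Prop :=
  ∀ v ∉ M, (∀ x ∈ M, G.Adj v x) ∨ (∀ x ∈ M, ¬ G.Adj v x)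

/-- `M` is a module of the digraph with arc relation `D`. -/
def DigraphModule (D : V → V → Prop) (M : Set V) : Prop :=
  ∀ v ∉ M, ∀ x ∈ M, ∀ y ∈ M, (D v x ↔ D v y) ∧ (D x v ↔ D y v)

/-- The digraph `D` is an orientation of the simple graph `G`: there is an arc between
`x` and `y` (in exactly one direction) iff `x` and `y` are adjacent in `G`. -/
def IsOrientation (G : SimpleGraph V) (D : V → V → Prop) : Prop :=
  ∀ x y : V, ((D x y ∨ D y x) ↔ G.Adj x y) ∧ ¬ (D x y ∧ D y x)

/-- A graph is prime if it has at least 3 vertices and all its modules are trivial. -/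
def GraphPrime [Fintype V] (G : SimpleGraph V) : Prop :=
  3 ≤ Fintype.card V ∧
    ∀ M : Set V, GraphModule G M → M.Subsingleton ∨ M = Set.univ

/-- A digraph is prime if it has at least 3 vertices and all its modules are trivial. -/
def DigraphPrime [Fintype V] (D : V → V → Prop) : Prop :=
  3 ≤ Fintype.card V ∧
    ∀ M : Set V, DigraphModule D M → M.Subsingleton ∨ M = Set.univ

/-- A graph is primarily orientable if it admits a prime orientation. -/
def PrimarilyOrientable [Fintype V] (G : SimpleGraph V) : Prop :=
  ∃ D : V → V → Prop, IsOrientation G D ∧ DigraphPrime D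

/-- `S` is a stable module (s-module) of `G`: a module of size at least 2 inducing no edges. -/
def StableModule (G : SimpleGraph V) (S : Set V) : Prop :=
  GraphModule G S ∧ 2 ≤ S.ncard ∧ ∀ x ∈ S, ∀ y ∈ S, ¬ G.Adj x y

/-- The neighbourhood `N_G(M)` of a module `M`: the vertices outside `M` adjacent to
some (equivalently, every) vertex of `M`. -/
def modNbhd (G : SimpleGraph V) (M : Set V) : Set V :=
  {v | v ∉ M ∧ ∃ x ∈ M, G.Adj v x}

/-- `M` is a module of the subgraph of `G` induced on the vertex set `X`. -/
def ModuleOn (G : SimpleGraph V) (X M : Set V) : Prop :=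
  M ⊆ X ∧ ∀ v ∈ X \ M, (∀ x ∈ M, G.Adj v x) ∨ (∀ x ∈ M, ¬ G.Adj v x)

/-- `S` is an s-duo (stable module of size 2) of the subgraph of `G` induced on `X`. -/
def SduoOn (G : SimpleGraph V) (X S : Set V) : Prop :=
  ModuleOn G X S ∧ S.ncard = 2 ∧ ∀ x ∈ S, ∀ y ∈ S, ¬ G.Adj x y

/-- `S` is an s-duo of `G`. -/
def Sduo (G : SimpleGraph V) (S : Set V) : Prop :=
  SduoOn G Set.univ S

/-- `G` has no s-duo. -/
def SduoFree (G : SimpleGraph V) : Prop := ∀ S : Set V, ¬ Sduo G S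

/-- `M` is a module of the subdigraph of `D` induced on the vertex set `X`. -/
def DModuleOn (D : V → V → Prop) (X M : Set V) : Prop :=
  M ⊆ X ∧ ∀ v ∈ X \ M, ∀ x ∈ M, ∀ y ∈ M, (D v x ↔ D v y) ∧ (D x v ↔ D y v)

/-- The subdigraph of `D` induced on `X` is prime. -/
def DPrimeOn (D : V → V → Prop) (X : Set V) : Prop :=
  3 ≤ X.ncard ∧ ∀ M : Set V, DModuleOn D X M → M.Subsingleton ∨ M = X

/-- `Ext_D(X)`: vertices `v ∉ X` such that `D[X ∪ {v}]` is prime. -/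
def ExtD (D : V → V → Prop) (X : Set V) : Set V :=
  {v | v ∉ X ∧ DPrimeOn D (X ∪ {v})}

/-- `⟨X⟩_D`: vertices `v ∉ X` such that `X` is a module of `D[X ∪ {v}]`. -/
def InnD (D : V → V → Prop) (X : Set V) : Set V :=
  {v | v ∉ X ∧ DModuleOn D (X ∪ {v}) X}

/-- `X_D(u)`: vertices `v ∉ X` such that `{u, v}` is a module of `D[X ∪ {v}]`. -/
def AttD (D : V → V → Prop) (X : Set V) (u : V) : Set V :=
  {v | v ∉ X ∧ DModuleOn D (X ∪ {v}) ({u, v} : Set V)}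

/-!
In a prime orientation the vertices of a stable module `S` are told apart only from the
neighbourhood of `S`, hence by the sets of their in-neighbours there: this gives `|S| ≤ 2 ^ d(S)`.

Conversely, let `X` be inclusion-maximal such that `G[X]` has a prime orientation `D`, and suppose
that some `v ∉ X` has a neighbour in `X`; put `N = N(v) ∩ X`. None of the `2 ^ |N|` ways to orient
the edges between `v` and `X` makes `D[X ∪ {v}]` prime, so by the Ehrenfeucht–Rozenberg partition
nearly every subset of `N`, taken as the out-neighbourhood of `v`, is copied from that of a twin
`u ∈ X` of `v`. If `v` has a non-adjacent twin in `X`, it therefore has at least `2 ^ |N|` of them.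
Otherwise all twins lie in `N`, and comparing `2 ^ |N|` with `2 |N|` leaves only the case where
`G[X ∪ {v}]` is `K₄`.

A prime `G[X]` can also be extended by two vertices at once: by a twin `u` of some `b ∈ X`, together
with any `w` adjacent to `u` or `b`, since the edges at `w` and `u` can be directed so that `w`
separates `u` from `b`. By maximality no such `w` exists. Hence in the case of `K₄` there are no
further vertices, and in the other case the false twins of `v` over `X` form a stable module of `G`
whose neighbourhood lies in `N`; as it contains `v` and `2 ^ |N|` vertices of `X`, it is too large.
-/

/-- `x` does not distinguish `y` from `z` in the digraph `D`. -/
def SeesAlike (D : V → V → Prop) (x y z : V) : Prop :=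
  (D x y ↔ D x z) ∧ (D y x ↔ D z x)

/-- The induced subgraph `G[X]` has a prime orientation; it is given as the restriction to `X` of
an orientation of the whole of `G`. -/
def PrimarilyOrientableOn (G : SimpleGraph V) (X : Set V) : Prop :=
  ∃ D : V → V → Prop, IsOrientation G D ∧ DPrimeOn D X

/-- No vertex of `X` other than `u` distinguishes `u` from `v` in `G`. For `u ∈ X` and `v ∉ X` this
says that `u` and `v`, adjacent or not, are twins in `G[X ∪ {v}]`. -/
def TwinOver (G : SimpleGraph V) (X : Set V) (u v : V) : Prop :=
  ∀ x ∈ X, x ≠ u → (G.Adj x u ↔ G.Adj x v)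

/-- The vertices, inside or outside `X`, with the same neighbours in `X` as `v`. -/
def falseTwins (G : SimpleGraph V) (X : Set V) (v : V) : Set V :=
  {u | ∀ x ∈ X, (G.Adj x u ↔ G.Adj x v)}

/-- The relation `D` with the edges of `G` at `v` reoriented, `P` selecting the out-neighbours. -/
def reorientAt (G : SimpleGraph V) (D : V → V → Prop) (v : V) (P : Set V) (x y : V) : Prop :=
  G.Adj x y ∧ ((x = v ∧ y ∈ P) ∨ (y = v ∧ x ∉ P) ∨ (x ≠ v ∧ y ≠ v ∧ D x y))

section Modules

variable {D D' : V → V → Prop} {X Y M : Set V} {b c u v w x y z : V}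

namespace SeesAlike

lemma symm (h : SeesAlike D x y z) : SeesAlike D x z y :=
  ⟨h.1.symm, h.2.symm⟩

lemma trans (h : SeesAlike D x y z) (h' : SeesAlike D x z w) : SeesAlike D x y w :=
  ⟨h.1.trans h'.1, h.2.trans h'.2⟩

end SeesAlike

namespace DModuleOn

lemma seesAlike (hM : DModuleOn D X M) (hv : v ∈ X) (hvM : v ∉ M) (hx : x ∈ M) (hy : y ∈ M) :
    SeesAlike D v x y :=
  hM.2 v ⟨hv, hvM⟩ x hx y hy

lemma inter (hM : DModuleOn D Y M) (hXY : X ⊆ Y) : DModuleOn D X (M ∩ X) :=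
  ⟨Set.inter_subset_right, fun _ hv _ hx _ hy =>
    hM.seesAlike (hXY hv.1) (fun hvM => hv.2 ⟨hvM, hv.1⟩) hx.1 hy.1⟩

end DModuleOn

lemma digraphPrime_iff_dPrimeOn_univ [Fintype V] : DigraphPrime D ↔ DPrimeOn D Set.univ := by
  simp only [DigraphPrime, DPrimeOn, DigraphModule, DModuleOn, Set.ncard_univ,
    Nat.card_eq_fintype_card, Set.subset_univ, Set.mem_sdiff, Set.mem_univ, true_and]

lemma mem_InnD_iff (hv : v ∉ X) : v ∈ InnD D X ↔ ∀ x ∈ X, ∀ y ∈ X, SeesAlike D v x y := by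
  refine ⟨fun h x hx y hy => h.2.seesAlike (Or.inr rfl) hv hx hy,
    fun h => ⟨hv, Set.subset_union_left, ?_⟩⟩
  rintro t ⟨ht | rfl, htX⟩ x hx y hy
  · exact absurd ht htX
  · exact h x hx y hy

lemma mem_AttD_iff (hu : u ∈ X) (hv : v ∉ X) :
    v ∈ AttD D X u ↔ ∀ x ∈ X, x ≠ u → SeesAlike D x u v := by
  constructor
  · intro h x hx hxu
    refine h.2.seesAlike (Or.inl hx) ?_ (Or.inl rfl) (Or.inr rfl)
    rintro (rfl | rfl)
    exacts [hxu rfl, hv hx]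
  · refine fun h => ⟨hv, Set.pair_subset (Or.inl hu) (Or.inr rfl), ?_⟩
    rintro t ⟨ht | rfl, htM⟩ x hx y hy
    · have htu : SeesAlike D t u v := h t ht fun e => htM (Or.inl e)
      rcases hx with rfl | rfl <;> rcases hy with rfl | rfl
      exacts [⟨Iff.rfl, Iff.rfl⟩, htu, htu.symm, ⟨Iff.rfl, Iff.rfl⟩]
    · exact absurd (Or.inr rfl) htM

namespace DPrimeOn

lemma finite (hX : DPrimeOn D X) : X.Finite :=
  Set.finite_of_ncard_pos (by have := hX.1; omega)

lemma exists_mem_ne_ne (hX : DPrimeOn D X) (b c : V) : ∃ a ∈ X, a ≠ b ∧ a ≠ c := by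
  have hlt : ({b, c} : Set V).ncard < X.ncard := by
    have hle := Set.ncard_insert_le b {c}
    rw [Set.ncard_singleton] at hle
    exact hle.trans_lt hX.1
  obtain ⟨a, haX, ha⟩ := Set.exists_mem_notMem_of_ncard_lt_ncard hlt
  simp only [Set.mem_insert_iff, Set.mem_singleton_iff, not_or] at ha
  exact ⟨a, haX, ha⟩

lemma congr (hX : DPrimeOn D X) (h : ∀ x ∈ X, ∀ y ∈ X, (D' x y ↔ D x y)) : DPrimeOn D' X := by
  refine ⟨hX.1, fun M hM => hX.2 M ⟨hM.1, fun v hv x hx y hy => ?_⟩⟩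
  rw [← h v hv.1 x (hM.1 hx), ← h v hv.1 y (hM.1 hy), ← h x (hM.1 hx) v hv.1,
    ← h y (hM.1 hy) v hv.1]
  exact hM.2 v hv x hx y hy

lemma exists_distinguishing (hX : DPrimeOn D X) (hb : b ∈ X) (hc : c ∈ X) (hbc : b ≠ c) :
    ∃ x ∈ X, x ≠ b ∧ x ≠ c ∧ ¬ SeesAlike D x b c := by
  by_contra! hall
  obtain ⟨a, ha, hab, hac⟩ := hX.exists_mem_ne_ne b c
  have hM : DModuleOn D X {b, c} := by
    refine ⟨Set.pair_subset hb hc, ?_⟩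
    rintro x ⟨hx, hxM⟩ y hy z hz
    simp only [Set.mem_insert_iff, Set.mem_singleton_iff, not_or] at hxM
    have hxbc := hall x hx hxM.1 hxM.2
    rcases hy with rfl | rfl <;> rcases hz with rfl | rfl
    exacts [⟨Iff.rfl, Iff.rfl⟩, hxbc, hxbc.symm, ⟨Iff.rfl, Iff.rfl⟩]
  rcases hX.2 _ hM with h | h
  · exact hbc (h (Or.inl rfl) (Or.inr rfl))
  · rcases h ▸ ha with h | h
    exacts [hab h, hac h]

lemma exists_distinguished (hX : DPrimeOn D X) (hc : c ∈ X) :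
    ∃ x ∈ X, ∃ y ∈ X, x ≠ c ∧ y ≠ c ∧ ¬ SeesAlike D c x y := by
  by_contra! hall
  have hM : DModuleOn D X (X \ {c}) := by
    refine ⟨Set.sdiff_subset, ?_⟩
    rintro x ⟨hx, hxM⟩ y ⟨hy, hyc⟩ z ⟨hz, hzc⟩
    obtain rfl : x = c := by simpa [hx] using hxM
    exact hall y hy z hz hyc hzc
  obtain ⟨a, ha, hac, -⟩ := hX.exists_mem_ne_ne c c
  obtain ⟨a', ha', ha'c, haa'⟩ := hX.exists_mem_ne_ne c a
  rcases hX.2 _ hM with h | h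
  · exact haa' (h ⟨ha', ha'c⟩ ⟨ha, hac⟩)
  · exact (h.ge hc).2 rfl

lemma exists_arc_of_ssubset (hX : DPrimeOn D X) {C : Set V} (hne : C.Nonempty) (hC : C ⊂ X) :
    ∃ x ∈ C, ∃ y ∈ X \ C, D x y ∨ D y x := by
  by_contra! hno
  have hmodC : DModuleOn D X C := ⟨hC.subset, fun v hv x hx y hy => by
    simp only [hno x hx v hv, hno y hy v hv, and_self]⟩
  have hmodC' : DModuleOn D X (X \ C) := ⟨Set.sdiff_subset, fun v hv x hx y hy => by
    have hvC : v ∈ C := by_contra fun h => hv.2 ⟨hv.1, h⟩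
    simp only [hno v hvC x hx, hno v hvC y hy, and_self]⟩
  obtain ⟨c, hc⟩ := hne
  obtain ⟨d, hdX, hdC⟩ := Set.exists_of_ssubset hC
  obtain ⟨e, he, hec, hed⟩ := hX.exists_mem_ne_ne c d
  by_cases heC : e ∈ C
  · rcases hX.2 C hmodC with h | h
    exacts [hec (h heC hc), hdC (h ▸ hdX)]
  · rcases hX.2 _ hmodC' with h | h
    exacts [hed (h ⟨he, heC⟩ ⟨hdX, hdC⟩), (h.ge (hC.subset hc)).2 hc]

lemma subset_or_inter_subsingleton (hX : DPrimeOn D X) (hM : DModuleOn D Y M) (hXY : X ⊆ Y) :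
    X ⊆ M ∨ (M ∩ X).Subsingleton :=
  (hX.2 _ (hM.inter hXY)).symm.imp_left Set.inter_eq_right.1

-- The Ehrenfeucht–Rozenberg partition of the vertices outside a prime induced sub-digraph.
theorem mem_ExtD_or_mem_InnD_or_mem_AttD (hX : DPrimeOn D X) (hv : v ∉ X) :
    v ∈ ExtD D X ∨ v ∈ InnD D X ∨ ∃ u ∈ X, v ∈ AttD D X u := by
  by_contra! ⟨hExt, hInn, hAtt⟩
  rw [ExtD, Set.mem_ofPred_eq, Set.union_singleton] at hExt
  refine hExt ⟨hv, hX.1.trans (Set.ncard_le_ncard_insert v X), fun M hM => ?_⟩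
  rcases hX.subset_or_inter_subsingleton hM (Set.subset_insert v X) with hXM | hsub
  · right
    refine hM.1.antisymm (Set.insert_subset ?_ hXM)
    by_contra hvM
    exact hInn ((mem_InnD_iff hv).2 fun x hx y hy =>
      hM.seesAlike (Set.mem_insert v X) hvM (hXM hx) (hXM hy))
  · left
    by_contra hM2
    rw [Set.not_subsingleton_iff] at hM2
    obtain ⟨u, huM, huv⟩ := hM2.exists_ne v
    have hu : u ∈ X := (hM.1 huM).resolve_left huv
    obtain ⟨t, htM, htu⟩ := hM2.exists_ne u
    obtain rfl : t = v := (hM.1 htM).resolve_right fun htX => htu (hsub ⟨htM, htX⟩ ⟨huM, hu⟩)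
    exact hAtt u hu ((mem_AttD_iff hu hv).2 fun x hx hxu =>
      hM.seesAlike (Or.inr hx) (fun hxM => hxu (hsub ⟨hxM, hx⟩ ⟨huM, hu⟩)) huM htM)

lemma inter_subset_singleton_of_mem_AttD (hX : DPrimeOn D X) (hM : DModuleOn D Y M) (hXY : X ⊆ Y)
    (hsub : (M ∩ X).Subsingleton) (hb : b ∈ X) (hu : u ∈ AttD D X b) (huM : u ∈ M) :
    M ∩ X ⊆ {b} := by
  rintro e ⟨heM, he⟩
  by_contra heb
  obtain ⟨x, hx, hxe, hxb, hxsep⟩ := hX.exists_distinguishing he hb heb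
  have hxM : x ∉ M := fun hxM => hxe (hsub ⟨hxM, hx⟩ ⟨heM, he⟩)
  exact hxsep ((hM.seesAlike (hXY hx) hxM heM huM).trans
    ((mem_AttD_iff hb hu.1).1 hu x hx hxb).symm)

lemma mem_of_mem_AttD_of_subset (hX : DPrimeOn D X) (hM : DModuleOn D Y M) (hXM : X ⊆ M)
    (hb : b ∈ X) (hu : u ∈ AttD D X b) (huY : u ∈ Y) : u ∈ M := by
  by_contra huM
  obtain ⟨x, hx, y, hy, hxb, hyb, hsep⟩ := hX.exists_distinguished hb
  have hubx := (mem_AttD_iff hb hu.1).1 hu x hx hxb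
  have huby := (mem_AttD_iff hb hu.1).1 hu y hy hyb
  have huxy := hM.seesAlike huY huM (hXM hx) (hXM hy)
  exact hsep ⟨hubx.2.trans (huxy.1.trans huby.2.symm), hubx.1.trans (huxy.2.trans huby.1.symm)⟩

lemma subsingleton_of_attached_mem (hX : DPrimeOn D X)
    (hM : DModuleOn D (insert w (insert u X)) M) (hsub : (M ∩ X).Subsingleton) (hb : b ∈ X)
    (hu : u ∈ AttD D X b) (hw : w ∉ X) (hwb : w ∉ AttD D X b) (hsep : ¬ SeesAlike D w b u)
    (huM : u ∈ M) : M.Subsingleton := by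
  have hXY : X ⊆ insert w (insert u X) := (Set.subset_insert u X).trans (Set.subset_insert w _)
  have hMX := hX.inter_subset_singleton_of_mem_AttD hM hXY hsub hb hu huM
  have hwM : w ∉ M := fun hwM => hwb ((mem_AttD_iff hb hw).2 fun x hx hxb =>
    ((mem_AttD_iff hb hu.1).1 hu x hx hxb).trans
      (hM.seesAlike (hXY hx) (fun hxM => hxb (hMX ⟨hxM, hx⟩)) huM hwM))
  by_contra hM2
  rw [Set.not_subsingleton_iff] at hM2
  obtain ⟨e, heM, heu⟩ := hM2.exists_ne u
  have he : e ∈ X := ((hM.1 heM).resolve_left fun h => hwM (h ▸ heM)).resolve_left heu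
  obtain rfl : e = b := hMX ⟨heM, he⟩
  exact hsep (hM.seesAlike (Or.inl rfl) hwM heM huM)

lemma subsingleton_of_attached_notMem (hM : DModuleOn D (insert w (insert u X)) M)
    (hsub : (M ∩ X).Subsingleton) (hb : b ∈ X) (hu : u ∈ AttD D X b) (hw : w ∉ X)
    (hwb : w ∉ AttD D X b) (hsep : ¬ SeesAlike D w b u) (huM : u ∉ M) : M.Subsingleton := by
  by_contra hM2
  rw [Set.not_subsingleton_iff] at hM2
  obtain ⟨e, heM, hew⟩ := hM2.exists_ne w
  have he : e ∈ X := ((hM.1 heM).resolve_left hew).resolve_left fun h => huM (h ▸ heM)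
  have hwM : w ∈ M := by
    obtain ⟨t, htM, hte⟩ := hM2.exists_ne e
    rcases hM.1 htM with rfl | rfl | htX
    exacts [htM, absurd htM huM, absurd (hsub ⟨htM, htX⟩ ⟨heM, he⟩) hte]
  have hout : ∀ x ∈ X, x ≠ e → SeesAlike D x e w := fun x hx hxe =>
    hM.seesAlike (Or.inr (Or.inr hx)) (fun hxM => hxe (hsub ⟨hxM, hx⟩ ⟨heM, he⟩)) heM hwM
  have heb : e ≠ b := by
    rintro rfl
    exact hwb ((mem_AttD_iff hb hw).2 hout)
  -- `w` agrees with `e` on both `b` and `u`, and `e` does not distinguish `b` from `u`.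
  have hb_et := hout b hb heb.symm
  have hu_et := hM.seesAlike (Or.inr (Or.inl rfl)) huM heM hwM
  have he_bu := (mem_AttD_iff hb hu.1).1 hu e he heb
  exact hsep ⟨hb_et.2.symm.trans (he_bu.1.trans hu_et.2),
    hb_et.1.symm.trans (he_bu.2.trans hu_et.1)⟩

theorem insert_insert (hX : DPrimeOn D X) (hb : b ∈ X) (hu : u ∈ AttD D X b) (hw : w ∉ X)
    (hwb : w ∉ AttD D X b) (hsep : ¬ SeesAlike D w b u) :
    DPrimeOn D (insert w (insert u X)) := by
  have hXY : X ⊆ insert w (insert u X) := (Set.subset_insert u X).trans (Set.subset_insert w _)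
  refine ⟨hX.1.trans ((Set.ncard_le_ncard_insert u X).trans (Set.ncard_le_ncard_insert w _)),
    fun M hM => ?_⟩
  rcases hX.subset_or_inter_subsingleton hM hXY with hXM | hsub
  · right
    have huM : u ∈ M := hX.mem_of_mem_AttD_of_subset hM hXM hb hu (Or.inr (Or.inl rfl))
    have hwM : w ∈ M := by_contra fun hwM => hsep (hM.seesAlike (Or.inl rfl) hwM (hXM hb) huM)
    exact hM.1.antisymm (Set.insert_subset hwM (Set.insert_subset huM hXM))
  · left
    by_cases huM : u ∈ M
    · exact hX.subsingleton_of_attached_mem hM hsub hb hu hw hwb hsep huM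
    · exact subsingleton_of_attached_notMem hM hsub hb hu hw hwb hsep huM

end DPrimeOn

lemma dPrimeOn_of_path (hxy : D x y) (hyx : ¬ D y x) (hyz : D y z) (hxz : ¬ D x z) :
    DPrimeOn D {x, y, z} := by
  have hxy' : x ≠ y := by rintro rfl; exact hyx hxy
  have hyz' : y ≠ z := by rintro rfl; exact hxz hxy
  have hxz' : x ≠ z := by rintro rfl; exact hyx hyz
  refine ⟨(Set.ncard_eq_three.2 ⟨x, y, z, hxy', hxz', hyz', rfl⟩).ge, fun M hM => ?_⟩
  have hz : x ∈ M → y ∈ M → z ∈ M := fun hxM hyM => by_contra fun hzM =>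
    hxz ((hM.seesAlike (by simp) hzM hxM hyM).2.2 hyz)
  have hx : y ∈ M → z ∈ M → x ∈ M := fun hyM hzM => by_contra fun hxM =>
    hxz ((hM.seesAlike (by simp) hxM hyM hzM).1.1 hxy)
  have hy : x ∈ M → z ∈ M → y ∈ M := fun hxM hzM => by_contra fun hyM =>
    hyx ((hM.seesAlike (by simp) hyM hxM hzM).1.2 hyz)
  refine M.subsingleton_or_nontrivial.imp_right fun ⟨p, hp, q, hq, hpq⟩ => hM.1.antisymm ?_
  have hall : x ∈ M ∧ y ∈ M ∧ z ∈ M := by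
    rcases hM.1 hp with rfl | rfl | rfl <;> rcases hM.1 hq with rfl | rfl | rfl <;> tauto
  exact Set.insert_subset hall.1 (Set.pair_subset hall.2.1 hall.2.2)

end Modules

section Orientations

variable {G : SimpleGraph V} {D : V → V → Prop} {X P : Set V} {b u v w x y z : V}

namespace IsOrientation

lemma adj_iff (hD : IsOrientation G D) : G.Adj x y ↔ D x y ∨ D y x :=
  (hD x y).1.symm

lemma asymm (hD : IsOrientation G D) (h : D x y) : ¬ D y x :=
  fun h' => (hD x y).2 ⟨h, h'⟩

lemma irrefl (hD : IsOrientation G D) : ¬ D x x :=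
  fun h => hD.asymm h h

lemma seesAlike_of_not_adj (hD : IsOrientation G D) (hx : ¬ G.Adj v x) (hy : ¬ G.Adj v y) :
    SeesAlike D v x y := by
  rw [hD.adj_iff, not_or] at hx hy
  exact ⟨iff_of_false hx.1 hy.1, iff_of_false hx.2 hy.2⟩

lemma seesAlike_of_adj (hD : IsOrientation G D) (hx : G.Adj v x) (hy : G.Adj v y)
    (h : D v x ↔ D v y) : SeesAlike D v x y := by
  have hin : ∀ {t}, G.Adj v t → (D t v ↔ ¬ D v t) := fun ht =>
    ⟨fun htv => hD.asymm htv, (hD.adj_iff.1 ht).resolve_left⟩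
  exact ⟨h, by rw [hin hx, hin hy, h]⟩

protected lemma reorientAt (hD : IsOrientation G D) (v : V) (P : Set V) :
    IsOrientation G (reorientAt G D v P) := by
  intro x y
  have hne : G.Adj x y → x ≠ y := fun h => h.ne
  have hxy := hD x y
  have hcomm := G.adj_comm x y
  unfold reorientAt
  grind

lemma reorientAt_of_ne (hD : IsOrientation G D) (P : Set V) (hx : x ≠ v) (hy : y ≠ v) :
    reorientAt G D v P x y ↔ D x y := by
  have hadj : D x y → G.Adj x y := fun h => hD.adj_iff.2 (Or.inl h)
  simpa [reorientAt, hx, hy] using hadj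

lemma dPrimeOn_reorientAt (hD : IsOrientation G D) (hX : DPrimeOn D X) (P : Set V)
    (hv : v ∉ X) : DPrimeOn (reorientAt G D v P) X :=
  hX.congr fun _ hx _ hy =>
    hD.reorientAt_of_ne P (ne_of_mem_of_not_mem hx hv) (ne_of_mem_of_not_mem hy hv)

end IsOrientation

lemma reorientAt_self_left : reorientAt G D v P v y ↔ G.Adj v y ∧ y ∈ P := by
  have hne : G.Adj v y → y ≠ v := fun h => h.ne'
  unfold reorientAt
  tauto

lemma reorientAt_self_right : reorientAt G D v P y v ↔ G.Adj v y ∧ y ∉ P := by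
  have hne : G.Adj v y → y ≠ v := fun h => h.ne'
  rw [reorientAt, G.adj_comm y v]
  tauto

lemma exists_isOrientation (G : SimpleGraph V) : ∃ D, IsOrientation G D := by
  refine ⟨fun x y => G.Adj x y ∧ WellOrderingRel x y, fun x y => ⟨⟨?_, fun h => ?_⟩, ?_⟩⟩
  · rintro (h | h)
    exacts [h.1, h.1.symm]
  · rcases trichotomous_of WellOrderingRel x y with hlt | heq | hgt
    exacts [Or.inl ⟨h, hlt⟩, absurd heq h.ne, Or.inr ⟨h.symm, hgt⟩]
  · rintro ⟨hxy, hyx⟩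
    exact asymm_of WellOrderingRel hxy.2 hyx.2

namespace PrimarilyOrientableOn

lemma of_path (hxy : G.Adj x y) (hyz : G.Adj y z) (hxz : x ≠ z) :
    PrimarilyOrientableOn G {x, y, z} := by
  obtain ⟨D, hD⟩ := exists_isOrientation G
  wlog hnot : ¬ D x z generalizing x z
  · have hrev : PrimarilyOrientableOn G {z, y, x} :=
      this hyz.symm hxy.symm hxz.symm (hD.asymm (not_not.1 hnot))
    rwa [Set.insert_comm, Set.pair_comm z x, Set.insert_comm] at hrev
  have hE := hD.reorientAt y {z}
  have hxy' : reorientAt G D y {z} x y := reorientAt_self_right.2 ⟨hxy.symm, hxz⟩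
  exact ⟨_, hE, dPrimeOn_of_path hxy' (hE.asymm hxy') (reorientAt_self_left.2 ⟨hyz, rfl⟩)
    (by rwa [hD.reorientAt_of_ne _ hxy.ne hyz.ne'])⟩

-- Any neighbour of `b` in `X` is made to distinguish `w` from `b`, by reversing at `w` the
-- directions found at `b`.
lemma exists_notMem_AttD (hX : PrimarilyOrientableOn G X) (hb : b ∈ X) (hw : w ∉ X) :
    ∃ D, IsOrientation G D ∧ DPrimeOn D X ∧ w ∉ AttD D X b := by
  obtain ⟨D, hD, hXD⟩ := hX
  refine ⟨_, hD.reorientAt w {x | ¬ D b x}, hD.dPrimeOn_reorientAt hXD _ hw, fun hwb => ?_⟩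
  obtain ⟨a, ha, hab, -⟩ := hXD.exists_mem_ne_ne b b
  obtain ⟨_, rfl, x, ⟨hx, hxb⟩, harc⟩ := hXD.exists_arc_of_ssubset (Set.singleton_nonempty b)
    ⟨Set.singleton_subset_iff.2 hb, fun h => hab (h ha)⟩
  have hxw : x ≠ w := ne_of_mem_of_not_mem hx hw
  have hbw := ne_of_mem_of_not_mem hb hw
  have halike := (mem_AttD_iff hb hw).1 hwb x hx hxb
  rw [SeesAlike, hD.reorientAt_of_ne _ hxw hbw, hD.reorientAt_of_ne _ hbw hxw,
    reorientAt_self_left, reorientAt_self_right, Set.mem_ofPred_eq] at halike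
  tauto

-- At `u` we copy the directions found at `b`, except that the edge `uw`, if present, is directed
-- so that `w` distinguishes `u` from `b`.
theorem insert_insert (hX : PrimarilyOrientableOn G X) (hb : b ∈ X) (hu : u ∉ X) (hw : w ∉ X)
    (hwu : w ≠ u) (hbu : TwinOver G X b u) (hadj : G.Adj w u ∨ G.Adj w b) :
    PrimarilyOrientableOn G (insert w (insert u X)) := by
  obtain ⟨D, hD, hXD, hwb⟩ := hX.exists_notMem_AttD hb hw
  let P : Set V := {y | (y = w ∧ D w b) ∨ (y ≠ w ∧ D b y)}
  have hne : ∀ x ∈ X, x ≠ u := fun x hx => ne_of_mem_of_not_mem hx hu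
  have hneu : ∀ x ∈ insert w X, x ≠ u := by
    rintro x (rfl | hx)
    exacts [hwu, hne x hx]
  have hold : ∀ x ∈ insert w X, ∀ y ∈ insert w X, (reorientAt G D u P x y ↔ D x y) :=
    fun x hx y hy => hD.reorientAt_of_ne P (hneu x hx) (hneu y hy)
  refine ⟨_, hD.reorientAt u P, (hD.dPrimeOn_reorientAt hXD P hu).insert_insert hb
    ((mem_AttD_iff hb hu).2 fun x hx hxb => ?_) hw (fun h => hwb ?_) fun h => ?_⟩
  · have hxw : x ≠ w := ne_of_mem_of_not_mem hx hw
    have hxP : x ∈ P ↔ D b x := by simp [P, hxw]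
    have hadj_iff := hbu x hx hxb
    rw [hD.adj_iff, G.adj_comm] at hadj_iff
    rw [SeesAlike, hold x (Or.inr hx) b (Or.inr hb), hold b (Or.inr hb) x (Or.inr hx),
      reorientAt_self_left, reorientAt_self_right, hxP, ← hadj_iff]
    have hasymm := (hD x b).2
    tauto
  · rw [mem_AttD_iff hb hw] at h ⊢
    intro x hx hxb
    have hxbw := h x hx hxb
    rwa [SeesAlike, hold x (Or.inr hx) b (Or.inr hb), hold b (Or.inr hb) x (Or.inr hx),
      hold x (Or.inr hx) w (Or.inl rfl), hold w (Or.inl rfl) x (Or.inr hx)] at hxbw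
  · have hwP : w ∈ P ↔ D w b := by simp [P]
    rw [SeesAlike, hold w (Or.inl rfl) b (Or.inr hb), hold b (Or.inr hb) w (Or.inl rfl),
      reorientAt_self_left, reorientAt_self_right, hwP, G.adj_comm u w] at h
    rw [hD.adj_iff (x := w) (y := b)] at hadj
    tauto

end PrimarilyOrientableOn

end Orientations

section OneVertexExtension

variable {G : SimpleGraph V} {D : V → V → Prop} {X : Set V} {b u v x y z : V}

lemma SeesAlike.adj_iff (h : SeesAlike D x y z) (hD : IsOrientation G D) :
    G.Adj x y ↔ G.Adj x z := by
  rw [hD.adj_iff, hD.adj_iff, h.1, h.2]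

lemma mem_falseTwins_iff (hu : u ∈ X) :
    u ∈ falseTwins G X v ↔ TwinOver G X u v ∧ ¬ G.Adj u v := by
  refine ⟨fun h => ⟨fun x hx _ => h x hx, fun huv => G.irrefl ((h u hu).2 huv)⟩, ?_⟩
  rintro ⟨htwin, hnadj⟩ x hx
  obtain rfl | hxu := eq_or_ne x u
  exacts [iff_of_false G.irrefl hnadj, htwin x hx hxu]

lemma TwinOver.mem_falseTwins (h : TwinOver G X u v) (hu : u ∈ X) (hb : b ∈ X)
    (hbv : b ∈ falseTwins G X v) : u ∈ falseTwins G X v := by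
  refine (mem_falseTwins_iff hu).2 ⟨h, fun huv => ?_⟩
  have hub : G.Adj u b := (hbv u hu).2 huv
  exact ((mem_falseTwins_iff hb).1 hbv).2 ((h b hb hub.ne').1 hub.symm)

-- Apply the Ehrenfeucht–Rozenberg partition to `D` reoriented at `v` with out-neighbourhood `P`.
lemma IsOrientation.exists_twinOver_sdiff_eq (hD : IsOrientation G D) (hX : DPrimeOn D X)
    (hv : v ∉ X) (hnb : ∃ x ∈ X, G.Adj v x) (hext : ¬ PrimarilyOrientableOn G (insert v X))
    {P : Set V} (hP : P ⊆ G.neighborSet v ∩ X) :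
    (X ⊆ G.neighborSet v ∧ (P = ∅ ∨ P = X)) ∨
      ∃ u ∈ X, TwinOver G X u v ∧ P \ {u} = {x ∈ G.neighborSet v ∩ X | D u x} := by
  have hE := hD.reorientAt v P
  rcases (hD.dPrimeOn_reorientAt hX P hv).mem_ExtD_or_mem_InnD_or_mem_AttD hv with
    hExt | hInn | ⟨u, hu, hAtt⟩
  · exact absurd ⟨_, hE, Set.union_singleton ▸ hExt.2⟩ hext
  · left
    rw [mem_InnD_iff hv] at hInn
    obtain ⟨a, ha, hva⟩ := hnb
    refine ⟨fun x hx => ((hInn a ha x hx).adj_iff hE).1 hva, ?_⟩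
    by_cases haP : a ∈ P
    · refine Or.inr ((hP.trans Set.inter_subset_right).antisymm fun x hx => ?_)
      have hvx := (hInn a ha x hx).1.1 (reorientAt_self_left.2 ⟨hva, haP⟩)
      exact (reorientAt_self_left.1 hvx).2
    · refine Or.inl (Set.eq_empty_of_forall_notMem fun x hx => ?_)
      have hxv := (hInn a ha x (hP hx).2).2.1 (reorientAt_self_right.2 ⟨hva, haP⟩)
      exact (reorientAt_self_right.1 hxv).2 hx
  · right
    rw [mem_AttD_iff hu hv] at hAtt
    have hout : ∀ x ∈ X, x ≠ u → (D u x ↔ G.Adj v x ∧ x ∈ P) := fun x hx hxu => by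
      rw [← hD.reorientAt_of_ne P (ne_of_mem_of_not_mem hu hv) (ne_of_mem_of_not_mem hx hv),
        (hAtt x hx hxu).2, reorientAt_self_left]
    refine ⟨u, hu, fun x hx hxu => (hAtt x hx hxu).adj_iff hE, Set.ext fun x => ⟨?_, ?_⟩⟩
    · rintro ⟨hxP, hxu⟩
      exact ⟨hP hxP, (hout x (hP hxP).2 hxu).2 ⟨(hP hxP).1, hxP⟩⟩
    · rintro ⟨⟨-, hx⟩, hux⟩
      have hxu : x ≠ u := by
        rintro rfl
        exact hD.irrefl hux
      exact ⟨((hout x hx hxu).1 hux).2, hxu⟩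

lemma two_pow_ncard_le_ncard_falseTwins (hX : PrimarilyOrientableOn G X) (hv : v ∉ X)
    (hnb : ∃ x ∈ X, G.Adj v x) (hext : ¬ PrimarilyOrientableOn G (insert v X))
    (hb : b ∈ X) (hbv : b ∈ falseTwins G X v) :
    2 ^ (G.neighborSet v ∩ X).ncard ≤ (falseTwins G X v ∩ X).ncard := by
  obtain ⟨D, hD, hXD⟩ := hX
  let N := G.neighborSet v ∩ X
  have hcover : 𝒫 N ⊆ (fun u => {x ∈ N | D u x}) '' (falseTwins G X v ∩ X) := by
    intro P hP
    rcases hD.exists_twinOver_sdiff_eq hXD hv hnb hext hP with ⟨hXN, -⟩ | ⟨u, hu, htwin, hPu⟩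
    · exact absurd (hXN hb).symm ((mem_falseTwins_iff hb).1 hbv).2
    · have hufalse := htwin.mem_falseTwins hu hb hbv
      have huP : u ∉ P := fun h => ((mem_falseTwins_iff hu).1 hufalse).2 (hP h).1.symm
      exact ⟨u, ⟨hufalse, hu⟩, hPu.symm.trans (Set.sdiff_singleton_eq_self huP)⟩
  have hfin : (falseTwins G X v ∩ X).Finite := hXD.finite.inter_of_right _
  rw [← Set.ncard_powerset N (hXD.finite.inter_of_right _)]
  exact (Set.ncard_le_ncard hcover (hfin.image _)).trans (Set.ncard_image_le hfin)

lemma two_pow_ncard_le_of_forall_subset {α : Type*} {N A : Set α} {E : Set (Set α)}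
    {f : α → Set α} (hN : N.Finite) (hA : A.Finite) (hE : E.Finite)
    (hcover : ∀ P ⊆ N, P ∈ E ∨ ∃ u ∈ A, P \ {u} = f u) :
    2 ^ N.ncard ≤ E.ncard + 2 * A.ncard := by
  have hsub : 𝒫 N ⊆ E ∪ (f '' A ∪ (fun u => insert u (f u)) '' A) := by
    intro P hP
    rcases hcover P hP with hPE | ⟨u, huA, hPu⟩
    · exact Or.inl hPE
    by_cases huP : u ∈ P
    · exact Or.inr (Or.inr ⟨u, huA, by simp only [← hPu, Set.insert_sdiff_self_of_mem huP]⟩)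
    · exact Or.inr (Or.inl ⟨u, huA, by rw [← hPu, Set.sdiff_singleton_eq_self huP]⟩)
  calc 2 ^ N.ncard = (𝒫 N).ncard := (Set.ncard_powerset N hN).symm
    _ ≤ (E ∪ (f '' A ∪ (fun u => insert u (f u)) '' A)).ncard :=
      Set.ncard_le_ncard hsub (hE.union ((hA.image _).union (hA.image _)))
    _ ≤ E.ncard + ((f '' A).ncard + ((fun u => insert u (f u)) '' A).ncard) :=
      (Set.ncard_union_le _ _).trans (Nat.add_le_add_left (Set.ncard_union_le _ _) _)
    _ ≤ E.ncard + 2 * A.ncard := by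
      have hcopy := Set.ncard_image_le (f := f) hA
      have hins := Set.ncard_image_le (f := fun u => insert u (f u)) hA
      omega

lemma subset_neighborSet_of_forall_notMem_falseTwins (hX : PrimarilyOrientableOn G X) (hv : v ∉ X)
    (hnb : ∃ x ∈ X, G.Adj v x) (hext : ¬ PrimarilyOrientableOn G (insert v X))
    (hno : ∀ u ∈ X, u ∉ falseTwins G X v) : X ⊆ G.neighborSet v := by
  by_contra hXN
  obtain ⟨D, hD, hXD⟩ := hX
  let N := G.neighborSet v ∩ X
  let A := {u ∈ N | TwinOver G X u v}
  have hN : N.Finite := hXD.finite.inter_of_right _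
  have hAN : A ⊆ N := Set.sep_subset _ _
  have hcover : ∀ P ⊆ N, P ∈ (∅ : Set (Set V)) ∨ ∃ u ∈ A, P \ {u} = {x ∈ N | D u x} := by
    intro P hP
    rcases hD.exists_twinOver_sdiff_eq hXD hv hnb hext hP with ⟨h, -⟩ | ⟨u, hu, htwin, hPu⟩
    · exact absurd h hXN
    · have huv : G.Adj u v := by_contra fun h => hno u hu ((mem_falseTwins_iff hu).2 ⟨htwin, h⟩)
      exact Or.inr ⟨u, ⟨⟨huv.symm, hu⟩, htwin⟩, hPu⟩
  have hcount := two_pow_ncard_le_of_forall_subset hN (hN.subset hAN) Set.finite_empty hcover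
  obtain ⟨a, ha, hva⟩ := hnb
  have hNA : A = N := by
    refine Set.eq_of_subset_of_ncard_le hAN ?_ hN
    obtain ⟨k, hk⟩ := Nat.exists_eq_add_one.2 ((Set.ncard_pos hN).2 ⟨a, hva, ha⟩)
    have hlt := Nat.lt_two_pow_self (n := k)
    rw [Set.ncard_empty, hk, pow_succ] at hcount
    omega
  have hNX : N ⊂ X :=
    Set.inter_subset_right.ssubset_of_ne fun h => hXN (Set.inter_eq_right.1 h)
  obtain ⟨x, hx, y, ⟨hy, hyN⟩, harc⟩ := hXD.exists_arc_of_ssubset (C := N) ⟨a, hva, ha⟩ hNX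
  have hyx : G.Adj y x := (hD.adj_iff.2 harc).symm
  exact hyN ⟨(((hNA.ge hx).2 y hy hyx.ne).1 hyx).symm, hy⟩

lemma ncard_eq_three_and_isClique (hX : PrimarilyOrientableOn G X) (hv : v ∉ X)
    (hnb : ∃ x ∈ X, G.Adj v x) (hext : ¬ PrimarilyOrientableOn G (insert v X))
    (hno : ∀ u ∈ X, u ∉ falseTwins G X v) : X.ncard = 3 ∧ G.IsClique (insert v X) := by
  have hXN := subset_neighborSet_of_forall_notMem_falseTwins hX hv hnb hext hno
  obtain ⟨D, hD, hXD⟩ := hX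
  let A := {u ∈ X | TwinOver G X u v}
  have hAX : A ⊆ X := Set.sep_subset _ _
  have hcover : ∀ P ⊆ X, P ∈ ({∅, X} : Set (Set V)) ∨
      ∃ u ∈ A, P \ {u} = {x ∈ G.neighborSet v ∩ X | D u x} := by
    intro P hP
    refine (hD.exists_twinOver_sdiff_eq hXD hv hnb hext (Set.subset_inter (hP.trans hXN) hP)).imp
      And.right ?_
    rintro ⟨u, hu, htwin, hPu⟩
    exact ⟨u, ⟨hu, htwin⟩, hPu⟩
  have hcount := two_pow_ncard_le_of_forall_subset hXD.finite (hXD.finite.subset hAX)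
    (Set.toFinite _) hcover
  have hpair : ({∅, X} : Set (Set V)).ncard ≤ 2 := by
    simpa only [Set.ncard_singleton] using Set.ncard_insert_le ∅ {X}
  have hAle : A.ncard ≤ X.ncard := Set.ncard_le_ncard hAX hXD.finite
  obtain ⟨k, hk⟩ := Nat.exists_eq_add_of_le' hXD.1
  have hlt := Nat.lt_two_pow_self (n := k + 1)
  rw [hk, show k + 3 = k + 1 + 2 from rfl, pow_add] at hcount
  have hAX' : A = X := Set.eq_of_subset_of_ncard_le hAX (by omega) hXD.finite
  refine ⟨by omega, SimpleGraph.isClique_insert.2 ⟨fun x hx y hy hxy => ?_, fun x hx _ => hXN hx⟩⟩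
  exact ((hAX'.ge hy).2 x hx hxy).2 (hXN hx).symm

end OneVertexExtension

section Sufficiency

variable {G : SimpleGraph V} {X : Set V} {b s u v w : V}

lemma exists_notMem_adj_of_connected (hG : G.Connected) (hne : X.Nonempty) (hX : X ≠ Set.univ) :
    ∃ v ∉ X, ∃ x ∈ X, G.Adj v x := by
  obtain ⟨a, ha⟩ := hne
  obtain ⟨b, hb⟩ := (Set.ne_univ_iff_exists_notMem X).1 hX
  obtain ⟨p⟩ := hG.preconnected a b
  obtain ⟨d, -, hdX, hdX'⟩ := p.exists_boundary_dart X ha hb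
  exact ⟨d.snd, hdX', d.fst, hdX, d.adj.symm⟩

lemma exists_primarilyOrientableOn (hG : G.Connected) (hcard : 3 ≤ Nat.card V) :
    ∃ X, PrimarilyOrientableOn G X := by
  have hlt : ∀ X : Set V, X.ncard < 3 → X ≠ Set.univ := by
    rintro _ h rfl
    rw [Set.ncard_univ] at h
    exact absurd hcard h.not_ge
  obtain ⟨x⟩ := hG.nonempty
  obtain ⟨y, hyx, x, rfl, hadj⟩ := exists_notMem_adj_of_connected hG (Set.singleton_nonempty x)
    (hlt _ (by simp only [Set.ncard_singleton, Nat.one_lt_ofNat]))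
  obtain ⟨z, hz, t, ht, hzt⟩ := exists_notMem_adj_of_connected hG (Set.insert_nonempty y {x})
    (hlt _ (by rw [Set.ncard_pair hyx]; norm_num))
  rw [Set.mem_insert_iff, Set.mem_singleton_iff, not_or] at hz
  rcases ht with rfl | rfl
  · exact ⟨_, .of_path hzt hadj hz.2⟩
  · exact ⟨_, .of_path hzt hadj.symm hz.1⟩

lemma not_adj_of_twinOver (hX : Maximal (PrimarilyOrientableOn G) X) (hb : b ∈ X) (hu : u ∉ X)
    (hw : w ∉ X) (hwu : w ≠ u) (hbu : TwinOver G X b u) : ¬ G.Adj w u ∧ ¬ G.Adj w b := by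
  have hXY : X ⊂ insert w (insert u X) :=
    (Set.ssubset_insert hu).trans_subset (Set.subset_insert w _)
  rw [← not_or]
  exact fun hadj => hX.not_prop_of_ssuperset hXY (hX.prop.insert_insert hb hu hw hwu hbu hadj)

lemma insert_eq_univ_of_isClique (hG : G.Connected) (hX : Maximal (PrimarilyOrientableOn G) X)
    (hv : v ∉ X) (hclique : G.IsClique (insert v X)) : insert v X = Set.univ := by
  by_contra hne
  obtain ⟨w, hw, x, hx, hwx⟩ := exists_notMem_adj_of_connected hG (Set.insert_nonempty v X) hne
  rw [Set.mem_insert_iff, not_or] at hw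
  have htwin : ∀ b ∈ X, TwinOver G X b v := fun b hb y hy hyb =>
    iff_of_true (hclique (Or.inr hy) (Or.inr hb) hyb)
      (hclique (Or.inr hy) (Or.inl rfl) (ne_of_mem_of_not_mem hy hv))
  obtain ⟨D, -, hXD⟩ := hX.prop
  obtain ⟨a, ha, -⟩ := hXD.exists_mem_ne_ne v v
  rcases hx with rfl | hx
  · exact (not_adj_of_twinOver hX ha hv hw.2 hw.1 (htwin a ha)).1 hwx
  · exact (not_adj_of_twinOver hX hx hv hw.2 hw.1 (htwin x hx)).2 hwx

lemma nonempty_iso_top_of_isClique_univ [Finite V] (h : G.IsClique Set.univ) :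
    Nonempty (G ≃g (⊤ : SimpleGraph (Fin (Nat.card V)))) := by
  obtain rfl : G = ⊤ := SimpleGraph.isClique_univ.1 h
  exact ⟨.completeGraph (Finite.equivFin V)⟩

lemma not_adj_of_mem_falseTwins (hX : Maximal (PrimarilyOrientableOn G) X) (hv : v ∉ X)
    (hb : b ∈ X) (hbv : b ∈ falseTwins G X v) (hs : s ∈ falseTwins G X v) (hw : w ∉ X) :
    ¬ G.Adj w s := by
  intro hws
  by_cases hsX : s ∈ X
  · obtain ⟨htwin, hsv⟩ := (mem_falseTwins_iff hsX).1 hs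
    obtain rfl | hwv := eq_or_ne w v
    · exact hsv hws.symm
    · exact (not_adj_of_twinOver hX hsX hv hw hwv htwin).2 hws
  · have hbs : TwinOver G X b s := fun x hx _ => (hbv x hx).trans (hs x hx).symm
    exact (not_adj_of_twinOver hX hb hsX hw hws.ne hbs).1 hws

lemma stableModule_falseTwins [Finite V] (hX : Maximal (PrimarilyOrientableOn G) X) (hv : v ∉ X)
    (hb : b ∈ X) (hbv : b ∈ falseTwins G X v) : StableModule G (falseTwins G X v) := by
  refine ⟨fun w _ => ?_, ?_, fun x hx y hy hxy => ?_⟩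
  · by_cases hw : w ∈ X
    · exact (em (G.Adj w v)).imp (fun h s hs => (hs w hw).2 h) fun h s hs => mt (hs w hw).1 h
    · exact Or.inr fun s hs => not_adj_of_mem_falseTwins hX hv hb hbv hs hw
  · rw [← Set.ncard_pair (ne_of_mem_of_not_mem hb hv)]
    exact Set.ncard_le_ncard (Set.pair_subset hbv fun _ _ => Iff.rfl)
  · by_cases hxX : x ∈ X
    · exact ((mem_falseTwins_iff hxX).1 hx).2 ((hy x hxX).1 hxy)
    · exact not_adj_of_mem_falseTwins hX hv hb hbv hy hxX hxy

lemma modNbhd_falseTwins_subset (hX : Maximal (PrimarilyOrientableOn G) X) (hv : v ∉ X)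
    (hb : b ∈ X) (hbv : b ∈ falseTwins G X v) :
    modNbhd G (falseTwins G X v) ⊆ G.neighborSet v ∩ X := by
  rintro w ⟨-, s, hs, hws⟩
  have hw : w ∈ X := by_contra fun hw => not_adj_of_mem_falseTwins hX hv hb hbv hs hw hws
  exact ⟨((hs w hw).1 hws).symm, hw⟩

lemma two_pow_ncard_modNbhd_lt [Finite V] (hX : Maximal (PrimarilyOrientableOn G) X) (hv : v ∉ X)
    (hnb : ∃ x ∈ X, G.Adj v x) (hb : b ∈ X) (hbv : b ∈ falseTwins G X v) :
    2 ^ (modNbhd G (falseTwins G X v)).ncard < (falseTwins G X v).ncard := by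
  have hext := hX.not_prop_of_ssuperset (Set.ssubset_insert hv)
  calc 2 ^ (modNbhd G (falseTwins G X v)).ncard
      ≤ 2 ^ (G.neighborSet v ∩ X).ncard := Nat.pow_le_pow_right two_pos
        (Set.ncard_le_ncard (modNbhd_falseTwins_subset hX hv hb hbv))
    _ ≤ (falseTwins G X v ∩ X).ncard :=
      two_pow_ncard_le_ncard_falseTwins hX.prop hv hnb hext hb hbv
    _ < (falseTwins G X v).ncard := Set.ncard_lt_ncard
      ⟨Set.inter_subset_left, fun h => hv (h (fun _ _ => Iff.rfl : v ∈ falseTwins G X v)).2⟩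

theorem primarilyOrientableOn_univ_of_connected [Finite V] (hG : G.Connected)
    (hcard : 3 ≤ Nat.card V) (hK4 : ¬ Nonempty (G ≃g (⊤ : SimpleGraph (Fin 4))))
    (hS : ∀ S, StableModule G S → S.ncard ≤ 2 ^ (modNbhd G S).ncard) :
    PrimarilyOrientableOn G Set.univ := by
  obtain ⟨X, hX⟩ := (Set.toFinite {X | PrimarilyOrientableOn G X}).exists_maximal
    (exists_primarilyOrientableOn hG hcard)
  have hne : X.Nonempty := Set.nonempty_of_ncard_ne_zero (by
    obtain ⟨D, -, h, -⟩ := hX.prop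
    omega)
  by_contra huniv
  obtain ⟨v, hv, hnb⟩ := exists_notMem_adj_of_connected hG hne fun h => huniv (h ▸ hX.prop)
  by_cases! hfalse : ∃ b ∈ X, b ∈ falseTwins G X v
  · obtain ⟨b, hb, hbv⟩ := hfalse
    exact (two_pow_ncard_modNbhd_lt hX hv hnb hb hbv).not_ge
      (hS _ (stableModule_falseTwins hX hv hb hbv))
  · obtain ⟨hX3, hclique⟩ := ncard_eq_three_and_isClique hX.prop hv hnb
      (hX.not_prop_of_ssuperset (Set.ssubset_insert hv)) hfalse
    have hall := insert_eq_univ_of_isClique hG hX hv hclique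
    have hcard4 : Nat.card V = 4 := by
      rw [← Set.ncard_univ, ← hall, Set.ncard_insert_of_notMem hv, hX3]
    exact hK4 (hcard4 ▸ nonempty_iso_top_of_isClique_univ (hall ▸ hclique))

end Sufficiency

section Necessity

variable {G : SimpleGraph V} {S : Set V}

lemma PrimarilyOrientableOn.connected (hG : PrimarilyOrientableOn G Set.univ) : G.Connected := by
  obtain ⟨D, hD, hprime⟩ := hG
  obtain ⟨a, -⟩ : (Set.univ : Set V).Nonempty :=
    Set.nonempty_of_ncard_ne_zero (by have := hprime.1; omega)
  have hall : {x | G.Reachable a x} = Set.univ := by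
    by_contra hne
    obtain ⟨x, hx, y, ⟨-, hy⟩, harc⟩ :=
      hprime.exists_arc_of_ssubset ⟨a, SimpleGraph.Reachable.refl a⟩ (Set.ssubset_univ_iff.2 hne)
    exact hy (hx.trans (hD.adj_iff.2 harc).reachable)
  exact SimpleGraph.connected_iff_exists_forall_reachable G |>.2 ⟨a, fun x => hall.ge trivial⟩

-- In a prime orientation, distinct vertices of `S` have distinct in-neighbourhoods.
lemma StableModule.ncard_le (hS : StableModule G S) (hG : PrimarilyOrientableOn G Set.univ) :
    S.ncard ≤ 2 ^ (modNbhd G S).ncard := by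
  obtain ⟨D, hD, hprime⟩ := hG
  obtain ⟨hmod, -, hstable⟩ := hS
  have hfin : (modNbhd G S).Finite := hprime.finite.subset (Set.subset_univ _)
  rw [← Set.ncard_powerset _ hfin]
  refine Set.ncard_le_ncard_of_injOn (fun x => {z ∈ modNbhd G S | D z x})
    (fun x _ => Set.sep_subset _ _) (fun x hx y hy hxy => ?_) hfin.finite_subsets
  by_contra hne
  obtain ⟨z, -, -, -, hsep⟩ := hprime.exists_distinguishing (Set.mem_univ x) (Set.mem_univ y) hne
  by_cases hz : z ∈ S
  · exact hsep (hD.seesAlike_of_not_adj (hstable z hz x hx) (hstable z hz y hy))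
  rcases hmod z hz with hadj | hnadj
  · have hzS : z ∈ modNbhd G S := ⟨hz, x, hx, hadj x hx⟩
    have hzxy : D z x ↔ D z y := by
      simpa only [Set.mem_sep_iff, hzS, true_and] using Set.ext_iff.1 hxy z
    exact hsep (hD.seesAlike_of_adj (hadj x hx) (hadj y hy) hzxy)
  · exact hsep (hD.seesAlike_of_not_adj (hnadj x hx) (hnadj y hy))

end Necessity

/-- Theorem 1 (main theorem): a graph with at least three vertices, other than `K₄`,
is primarily orientable iff it is connected and every stable module `S` satisfies
`2 ^ d_G(S) ≥ |S|`. -/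
theorem primarily_orientable_iff [Fintype V] (G : SimpleGraph V)
    (hcard : 3 ≤ Fintype.card V)
    (hK4 : ¬ Nonempty (G ≃g (⊤ : SimpleGraph (Fin 4)))) :
    PrimarilyOrientable G ↔
      G.Connected ∧
        ∀ S : Set V, StableModule G S → S.ncard ≤ 2 ^ (modNbhd G S).ncard := by
  have hiff : PrimarilyOrientable G ↔ PrimarilyOrientableOn G Set.univ :=
    exists_congr fun D => and_congr_right fun _ => digraphPrime_iff_dPrimeOn_univ
  rw [hiff]
  constructor
  · exact fun hG => ⟨hG.connected, fun S hS => hS.ncard_le hG⟩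
  · rintro ⟨hconn, hS⟩
    rw [← Nat.card_eq_fintype_card] at hcard
    exact primarilyOrientableOn_univ_of_connected hconn hcard hK4 hS
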